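/- arXiv:1407.5544 — 4 statements merged into one kernel-verified Lean document; each statement's English description precedes it below -/
import Mathlib

section
/- Let N ≥ 1, let ψ : ℝ^N → ℝ be a smooth compactly supported function with ψ not identically zero, and let λ ∈ ℝ satisfy ∫_{ℝ^N} |Δψ(x)|² dx + ∫_{ℝ^N} ψ(x)² dx = λ ∫_{ℝ^N} |∇ψ(x)|² dx. Then λ ≥ 2. -/
open MeasureTheory

/-!
Green's identity gives `∫ ‖∇ψ‖² = -∫ ψ Δψ`, and `-2 ψ Δψ ≤ (Δψ)² + ψ²` pointwise, so
`2 ∫ ‖∇ψ‖² ≤ ∫ (Δψ)² + ∫ ψ² = lam ∫ ‖∇ψ‖²`. The middle expression is positive because `ψ ≠ 0`;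
hence so is `∫ ‖∇ψ‖²`, and it can be cancelled.
-/

open scoped Gradient Laplacian InnerProductSpace

section FDeriv

variable {𝕜 E F : Type*} [NontriviallyNormedField 𝕜] [NormedAddCommGroup E] [NormedSpace 𝕜 E]
  [NormedAddCommGroup F] [NormedSpace 𝕜 F] {f : E → F}

theorem iteratedFDeriv_two_apply_eq_fderiv_fderiv {x : E}
    (hf : DifferentiableAt 𝕜 (fderiv 𝕜 f) x) (v w : E) :
    iteratedFDeriv 𝕜 2 f x ![v, w] = fderiv 𝕜 (fun y => fderiv 𝕜 f y w) x v := by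
  rw [iteratedFDeriv_two_apply, fderiv_clm_apply hf (differentiableAt_const w)]
  simp

theorem contDiff_fderiv_apply {m n : WithTop ℕ∞} (hf : ContDiff 𝕜 n f) (hmn : m + 1 ≤ n) (v : E) :
    ContDiff 𝕜 m fun x => fderiv 𝕜 f x v :=
  (hf.fderiv_right hmn).clm_apply contDiff_const

theorem continuous_fderiv_fderiv_apply (hf : ContDiff 𝕜 2 f) (v w : E) :
    Continuous fun x => fderiv 𝕜 (fun y => fderiv 𝕜 f y w) x v :=
  (contDiff_fderiv_apply (contDiff_fderiv_apply hf one_add_one_eq_two.le w)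
    (zero_add 1).le v).continuous

end FDeriv

section Laplacian

variable {E F ι : Type*} [NormedAddCommGroup E] [InnerProductSpace ℝ E]
  [NormedAddCommGroup F] [NormedSpace ℝ F]

theorem inner_gradient_gradient_eq_sum [CompleteSpace E] [Fintype ι] (b : OrthonormalBasis ι ℝ E)
    (f g : E → ℝ) (x : E) :
    ⟪∇ f x, ∇ g x⟫_ℝ = ∑ i, fderiv ℝ f x (b i) * fderiv ℝ g x (b i) := by
  rw [← b.sum_inner_mul_inner]
  exact Finset.sum_congr rfl fun i _ => by
    rw [inner_gradient_left, inner_gradient_right, conj_trivial]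

variable [FiniteDimensional ℝ E]

theorem laplacian_eq_sum_fderiv_fderiv [Fintype ι] (b : OrthonormalBasis ι ℝ E) {f : E → F} {x : E}
    (hf : ContDiffAt ℝ 2 f x) :
    Δ f x = ∑ i, fderiv ℝ (fun y => fderiv ℝ f y (b i)) x (b i) := by
  have hdf : DifferentiableAt ℝ (fderiv ℝ f) x :=
    (hf.fderiv_right one_add_one_eq_two.le).differentiableAt one_ne_zero
  simp only [InnerProductSpace.laplacian_eq_iteratedFDeriv_orthonormalBasis f b,
    iteratedFDeriv_two_apply_eq_fderiv_fderiv hdf]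

theorem continuous_laplacian {f : E → F} (hf : ContDiff ℝ 2 f) : Continuous (Δ f) := by
  rw [InnerProductSpace.laplacian_eq_iteratedFDeriv_stdOrthonormalBasis]
  exact continuous_finsetSum _ fun i _ => (hf.continuous_iteratedFDeriv le_rfl).eval_const _

theorem hasCompactSupport_laplacian {f : E → F} (hf : HasCompactSupport f) :
    HasCompactSupport (Δ f) := by
  refine (hf.iteratedFDeriv (𝕜 := ℝ) 2).mono fun x hx hD => hx ?_
  simp [InnerProductSpace.laplacian_eq_iteratedFDeriv_stdOrthonormalBasis, hD]

end Laplacian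

section Integration

variable {E : Type*} [NormedAddCommGroup E] [MeasurableSpace E] [BorelSpace E]
  {μ : Measure E} [μ.IsAddHaarMeasure] {f g : E → ℝ}

theorem integral_mul_fderiv_fderiv_eq_neg [NormedSpace ℝ E] [FiniteDimensional ℝ E]
    (hf : ContDiff ℝ 1 f) (hg : ContDiff ℝ 2 g) (hc : HasCompactSupport f) (v : E) :
    ∫ x, f x * fderiv ℝ (fun y => fderiv ℝ g y v) x v ∂μ =
      -∫ x, fderiv ℝ f x v * fderiv ℝ g x v ∂μ := by
  have hf' : Continuous fun x => fderiv ℝ f x v :=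
    (contDiff_fderiv_apply hf (zero_add 1).le v).continuous
  have hg' : ContDiff ℝ 1 fun x => fderiv ℝ g x v :=
    contDiff_fderiv_apply hg one_add_one_eq_two.le v
  exact integral_mul_fderiv_eq_neg_fderiv_mul_of_integrable
    ((hf'.mul hg'.continuous).integrable_of_hasCompactSupport (hc.fderiv_apply ℝ v).mul_right)
    ((hf.continuous.mul (continuous_fderiv_fderiv_apply hg v v)).integrable_of_hasCompactSupport
      hc.mul_right)
    ((hf.continuous.mul hg'.continuous).integrable_of_hasCompactSupport hc.mul_right)
    (fun x _ => hf.differentiable one_ne_zero x) (fun x _ => hg'.differentiable one_ne_zero x)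

variable [InnerProductSpace ℝ E] [FiniteDimensional ℝ E]

theorem integral_mul_laplacian_eq_neg_integral_inner_gradient
    (hf : ContDiff ℝ 1 f) (hg : ContDiff ℝ 2 g) (hc : HasCompactSupport f) :
    ∫ x, f x * Δ g x ∂μ = -∫ x, ⟪∇ f x, ∇ g x⟫_ℝ ∂μ := by
  let b := stdOrthonormalBasis ℝ E
  have integrable_second (i) :
      Integrable (fun x => f x * fderiv ℝ (fun y => fderiv ℝ g y (b i)) x (b i)) μ :=
    hf.continuous.mul (continuous_fderiv_fderiv_apply hg (b i) (b i))
      |>.integrable_of_hasCompactSupport hc.mul_right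
  have integrable_first (i) : Integrable (fun x => fderiv ℝ f x (b i) * fderiv ℝ g x (b i)) μ :=
    (contDiff_fderiv_apply hf (zero_add 1).le (b i)).continuous.mul
      (contDiff_fderiv_apply hg one_add_one_eq_two.le (b i)).continuous
      |>.integrable_of_hasCompactSupport (hc.fderiv_apply ℝ (b i)).mul_right
  simp only [laplacian_eq_sum_fderiv_fderiv b hg.contDiffAt, inner_gradient_gradient_eq_sum b,
    Finset.mul_sum]
  rw [integral_finsetSum _ fun i _ => integrable_second i,
    integral_finsetSum _ fun i _ => integrable_first i, ← Finset.sum_neg_distrib]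
  exact Finset.sum_congr rfl fun i _ => integral_mul_fderiv_fderiv_eq_neg hf hg hc (b i)

theorem two_mul_integral_norm_gradient_sq_le (hf : ContDiff ℝ 2 f) (hc : HasCompactSupport f) :
    2 * ∫ x, ‖∇ f x‖ ^ 2 ∂μ ≤ (∫ x, Δ f x ^ 2 ∂μ) + ∫ x, f x ^ 2 ∂μ := by
  have memLp_f : MemLp f 2 μ := hf.continuous.memLp_of_hasCompactSupport hc
  have memLp_laplacian : MemLp (Δ f) 2 μ :=
    (continuous_laplacian hf).memLp_of_hasCompactSupport (hasCompactSupport_laplacian hc)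
  calc 2 * ∫ x, ‖∇ f x‖ ^ 2 ∂μ
      = ∫ x, -2 * (f x * Δ f x) ∂μ := by
        rw [integral_const_mul, integral_mul_laplacian_eq_neg_integral_inner_gradient
          (hf.of_le one_le_two) hf hc]
        simp only [real_inner_self_eq_norm_sq, neg_mul_neg]
    _ ≤ ∫ x, Δ f x ^ 2 + f x ^ 2 ∂μ :=
        integral_mono ((memLp_f.integrable_mul memLp_laplacian).const_mul (-2))
          (memLp_laplacian.integrable_sq.add memLp_f.integrable_sq)
          fun x => by linarith [sq_nonneg (Δ f x + f x)]
    _ = (∫ x, Δ f x ^ 2 ∂μ) + ∫ x, f x ^ 2 ∂μ :=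
        integral_add memLp_laplacian.integrable_sq memLp_f.integrable_sq

theorem eigenvalue_ge_two_general (hf : ContDiff ℝ 2 f) (hc : HasCompactSupport f) (hne : f ≠ 0)
    {lam : ℝ} (heq : (∫ x, Δ f x ^ 2 ∂μ) + ∫ x, f x ^ 2 ∂μ = lam * ∫ x, ‖∇ f x‖ ^ 2 ∂μ) :
    2 ≤ lam := by
  obtain ⟨x, hx⟩ := Function.ne_iff.1 hne
  have integral_sq_pos : 0 < ∫ x, f x ^ 2 ∂μ :=
    (hf.continuous.pow 2).integral_pos_of_hasCompactSupport_nonneg_nonzero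
      (hc.comp_left (zero_pow two_ne_zero)) (fun x => sq_nonneg (f x)) (pow_ne_zero 2 hx)
  have integral_laplacian_sq_nonneg : 0 ≤ ∫ x, Δ f x ^ 2 ∂μ :=
    integral_nonneg fun x => sq_nonneg (Δ f x)
  have energy_nonneg : 0 ≤ ∫ x, ‖∇ f x‖ ^ 2 ∂μ := integral_nonneg fun x => sq_nonneg ‖∇ f x‖
  have energy_pos : 0 < ∫ x, ‖∇ f x‖ ^ 2 ∂μ :=
    energy_nonneg.lt_of_ne' <| right_ne_zero_of_mul <| ne_of_gt <|
      heq ▸ add_pos_of_nonneg_of_pos integral_laplacian_sq_nonneg integral_sq_pos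
  exact le_of_mul_le_mul_right (heq ▸ two_mul_integral_norm_gradient_sq_le hf hc) energy_pos

end Integration

/-- if a nonzero smooth compactly supported `ψ : ℝ^N → ℝ` satisfies the
Rayleigh-quotient relation `∫ |Δψ|² + ∫ ψ² = λ ∫ |∇ψ|²`, then `λ ≥ 2`. -/
theorem eigenvalue_ge_two (N : ℕ) (hN : 1 ≤ N)
    (ψ : EuclideanSpace ℝ (Fin N) → ℝ)
    (hψ : ContDiff ℝ (⊤ : ℕ∞) ψ) (hsupp : HasCompactSupport ψ) (hne : ψ ≠ 0)
    (lam : ℝ)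
    (heq : (∫ x, (∑ i, fderiv ℝ (fun y => fderiv ℝ ψ y (EuclideanSpace.single i 1)) x
            (EuclideanSpace.single i 1)) ^ 2) + (∫ x, ψ x ^ 2)
        = lam * ∫ x, ‖gradient ψ x‖ ^ 2) :
    2 ≤ lam := by
  have hψ₂ : ContDiff ℝ 2 ψ := hψ.of_le (WithTop.coe_le_coe.2 le_top)
  refine eigenvalue_ge_two_general (μ := volume) hψ₂ hsupp hne ?_
  simpa only [laplacian_eq_sum_fderiv_fderiv (EuclideanSpace.basisFun _ ℝ) hψ₂.contDiffAt,
    EuclideanSpace.basisFun_apply] using heq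
end

section
/- Let p > 1 be a real number, set μ = min{1, p−1}, and let a > 0. Define, for s ≥ 0, T(s) = (a+s)^p s − a^p s − ((2+μ)/(p+1)) (a+s)^{p+1} + ((2+μ)/(p+1)) a^{p+1} + (2+μ) a^p s + (μ/2) p a^{p−1} s². Then T(s) ≥ 0 for every s ≥ 0. -/
/-!
Let `R` be the second-order Taylor remainder of `x ↦ x ^ (p + 1) / (p + 1)` at `a`, as a function
of the increment `s`. Then `T(s) = s R'(s) - (2 + μ) R(s)`. If `f(0) = 0`, an inequality
`κ f' ≤ s f''` on `[0, ∞)` integrates to `(κ + 1) f ≤ s f'`, because `s f' - (κ + 1) f` has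
derivative `s f'' - κ f'`. Two integrations reduce `T ≥ 0` to `μ R'' ≤ s R'''`, which amounts to
`min {1, q} (b ^ q - a ^ q) ≤ q (b - a) b ^ (q - 1)` for `q = p - 1` and `b = a + s`. By
homogeneity this is Bernoulli's inequality when `q ≥ 1`, and `t ≤ t ^ q` for `t = a / b` when
`q ≤ 1`.
-/

open Set

theorem add_one_mul_le_mul_of_mul_deriv_le {f f' f'' : ℝ → ℝ} {κ : ℝ} (hf₀ : f 0 = 0)
    (hf : ∀ s, 0 ≤ s → HasDerivAt f (f' s) s) (hf' : ∀ s, 0 ≤ s → HasDerivAt f' (f'' s) s)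
    (hle : ∀ s, 0 ≤ s → κ * f' s ≤ s * f'' s) {s : ℝ} (hs : 0 ≤ s) :
    (κ + 1) * f s ≤ s * f' s := by
  have hderiv (x : ℝ) (hx : 0 ≤ x) :
      HasDerivAt (fun x ↦ x * f' x - (κ + 1) * f x) (x * f'' x - κ * f' x) x :=
    (((hasDerivAt_id' x).mul (hf' x hx)).sub ((hf x hx).const_mul (κ + 1))).congr_deriv (by ring)
  have hmono : MonotoneOn (fun x ↦ x * f' x - (κ + 1) * f x) (Ici 0) :=
    monotoneOn_of_hasDerivWithinAt_nonneg (convex_Ici 0)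
      (fun x hx ↦ (hderiv x hx).continuousAt.continuousWithinAt)
      (fun x hx ↦ (hderiv x (interior_subset hx)).hasDerivWithinAt)
      (fun x hx ↦ sub_nonneg.2 (hle x (interior_subset hx)))
  simpa [hf₀] using hmono self_mem_Ici hs hs

theorem min_one_mul_one_sub_rpow_le {q t : ℝ} (hq : 0 ≤ q) (ht₀ : 0 ≤ t) (ht₁ : t ≤ 1) :
    min 1 q * (1 - t ^ q) ≤ q * (1 - t) := by
  rcases le_total 1 q with h | h
  · have bernoulli : 1 + q * (t - 1) ≤ (1 + (t - 1)) ^ q :=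
      one_add_mul_self_le_rpow_one_add (by linarith) h
    rw [add_sub_cancel] at bernoulli
    rw [min_eq_left h]
    linarith
  · rw [min_eq_right h]
    gcongr
    exact Real.self_le_rpow_of_le_one ht₀ ht₁ h

theorem min_one_mul_rpow_sub_rpow_le {q a b : ℝ} (hq : 0 ≤ q) (ha : 0 ≤ a) (hb : 0 < b)
    (hab : a ≤ b) : min 1 q * (b ^ q - a ^ q) ≤ q * (b - a) * b ^ (q - 1) := by
  have hbq : b ^ q ≠ 0 := (Real.rpow_pos_of_pos hb q).ne'
  calc min 1 q * (b ^ q - a ^ q) = min 1 q * (1 - (a / b) ^ q) * b ^ q := by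
        rw [Real.div_rpow ha hb.le]
        field_simp
    _ ≤ q * (1 - a / b) * b ^ q := by
        refine mul_le_mul_of_nonneg_right ?_ (by positivity)
        exact min_one_mul_one_sub_rpow_le hq (by positivity) (div_le_one_of_le₀ hab hb.le)
    _ = q * (b - a) * b ^ (q - 1) := by
        rw [Real.rpow_sub_one hb.ne']
        field_simp

theorem hasDerivAt_const_add_rpow {a s : ℝ} (r : ℝ) (h : a + s ≠ 0) :
    HasDerivAt (fun x ↦ (a + x) ^ r) (r * (a + s) ^ (r - 1)) s := by
  simpa using ((hasDerivAt_id s).const_add a).rpow_const (p := r) (Or.inl h)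

/-- The first-order Taylor remainder of `x ↦ x ^ r` at `a`, as a function of the increment `s`;
up to the factor `r + 1` it is the derivative of `rpowRemainderTwo (r + 1) a`. -/
noncomputable def rpowRemainderOne (r a s : ℝ) : ℝ :=
  (a + s) ^ r - a ^ r - r * a ^ (r - 1) * s

/-- The second-order Taylor remainder of `x ↦ x ^ r` at `a`, as a function of the increment `s`;
for `r = p + 1` it is `p + 1` times the function `R` in terms of which `T` is written. -/
noncomputable def rpowRemainderTwo (r a s : ℝ) : ℝ :=
  rpowRemainderOne r a s - r * (r - 1) / 2 * a ^ (r - 2) * s ^ 2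

theorem hasDerivAt_rpowRemainderOne {a s : ℝ} (r : ℝ) (h : a + s ≠ 0) :
    HasDerivAt (rpowRemainderOne r a) (r * ((a + s) ^ (r - 1) - a ^ (r - 1))) s :=
  (((hasDerivAt_const_add_rpow r h).sub_const (a ^ r)).sub
    ((hasDerivAt_id' s).const_mul (r * a ^ (r - 1)))).congr_deriv (by ring)

theorem hasDerivAt_rpowRemainderTwo {a s : ℝ} (r : ℝ) (h : a + s ≠ 0) :
    HasDerivAt (rpowRemainderTwo r a) (r * rpowRemainderOne (r - 1) a s) s := by
  refine ((hasDerivAt_rpowRemainderOne r h).sub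
    ((hasDerivAt_pow 2 s).const_mul (r * (r - 1) / 2 * a ^ (r - 2)))).congr_deriv ?_
  rw [rpowRemainderOne, show r - 1 - 1 = r - 2 by ring]
  ring

theorem min_one_add_one_mul_rpowRemainderOne_le {r a s : ℝ} (hr : 1 ≤ r) (ha : 0 < a)
    (hs : 0 ≤ s) :
    (min 1 (r - 1) + 1) * rpowRemainderOne r a s ≤ s * (r * ((a + s) ^ (r - 1) - a ^ (r - 1))) := by
  refine add_one_mul_le_mul_of_mul_deriv_le
    (f'' := fun x ↦ r * ((r - 1) * (a + x) ^ (r - 1 - 1))) (by simp [rpowRemainderOne])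
    (fun x hx ↦ hasDerivAt_rpowRemainderOne r (by positivity))
    (fun x hx ↦ ((hasDerivAt_const_add_rpow (r - 1) (by positivity)).sub_const _).const_mul r)
    (fun x hx ↦ ?_) hs
  have increment_le : min 1 (r - 1) * ((a + x) ^ (r - 1) - a ^ (r - 1)) ≤
      (r - 1) * (a + x - a) * (a + x) ^ (r - 1 - 1) :=
    min_one_mul_rpow_sub_rpow_le (by linarith) ha.le (by positivity) (by linarith)
  linear_combination r * increment_le

theorem min_one_add_two_mul_rpowRemainderTwo_le {r a s : ℝ} (hr : 2 ≤ r) (ha : 0 < a)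
    (hs : 0 ≤ s) :
    (min 1 (r - 2) + 2) * rpowRemainderTwo r a s ≤ s * (r * rpowRemainderOne (r - 1) a s) := by
  rw [show min 1 (r - 2) + 2 = min 1 (r - 1 - 1) + 1 + 1 by ring_nf]
  refine add_one_mul_le_mul_of_mul_deriv_le (by simp [rpowRemainderTwo, rpowRemainderOne])
    (fun x hx ↦ hasDerivAt_rpowRemainderTwo r (by positivity))
    (fun x hx ↦ (hasDerivAt_rpowRemainderOne (r - 1) (by positivity)).const_mul r)
    (fun x hx ↦ ?_) hs
  linear_combination
    r * min_one_add_one_mul_rpowRemainderOne_le (r := r - 1) (by linarith) ha hx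

/-- Lemma 3.5(i): for real `p > 1`, `μ = min {1, p-1}` and `a > 0`, the
function `T(s) = (a+s)^p s − a^p s − ((2+μ)/(p+1))(a+s)^{p+1} + ((2+μ)/(p+1)) a^{p+1}
+ (2+μ) a^p s + (μ/2) p a^{p−1} s²` is nonnegative for all `s ≥ 0`. -/
theorem T_nonneg (p : ℝ) (hp : 1 < p) (a : ℝ) (ha : 0 < a) :
    ∀ s : ℝ, 0 ≤ s →
      0 ≤ (a + s) ^ p * s - a ^ p * s
          - ((2 + min 1 (p - 1)) / (p + 1)) * (a + s) ^ (p + 1)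
          + ((2 + min 1 (p - 1)) / (p + 1)) * a ^ (p + 1)
          + (2 + min 1 (p - 1)) * a ^ p * s
          + (min 1 (p - 1) / 2) * p * a ^ (p - 1) * s ^ 2 := by
  intro s hs
  have remainder_le := min_one_add_two_mul_rpowRemainderTwo_le (r := p + 1) (by linarith) ha hs
  have hp₁ : 0 < p + 1 := by linarith
  have key : 0 ≤ (s * ((p + 1) * rpowRemainderOne (p + 1 - 1) a s) -
      (min 1 (p + 1 - 2) + 2) * rpowRemainderTwo (p + 1) a s) / (p + 1) :=
    div_nonneg (sub_nonneg.2 remainder_le) hp₁.le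
  convert key using 1
  simp only [rpowRemainderTwo, rpowRemainderOne, add_sub_cancel_right,
    show p + 1 - 2 = p - 1 by ring]
  field_simp
  ring
end

section
/- Let p > 1 be a real number. For a > 0 and s ≥ 0 define H(a,s) = (1/(p+1)) (a+s)^{p+1} − (1/(p+1)) a^{p+1} − s a^p. Then for every ε > 0 there exists a constant C_ε > 0 such that for all a > 0 and all s ≥ 0, H(a,s) − (p/2) a^{p−1} s² ≤ ε a^{p−1} s² + C_ε s^{p+1}. -/
/-!
By Taylor's theorem `H(a,s) = (p/2) ξ^{p-1} s²` for some `ξ ∈ [a, a+s]`, so it is enough to bound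
`ξ^{p-1}` by `(1 + η) a^{p-1} + C s^{p-1}` with `η > 0` as small as we please. When `s ≤ δ a` we
have `ξ ≤ (1 + δ) a`, and otherwise `ξ ≤ (1 + δ⁻¹) s`; taking `δ` small makes `(1 + δ)^{p-1}`
close to `1`. (For `p ≤ 1` already `ξ^{p-1} ≤ a^{p-1}`.)
-/

open Set

theorem exists_rpow_eq_taylor_two (r : ℝ) {x y : ℝ} (hx : 0 < x) (hy : 0 < y) :
    ∃ ξ ∈ uIcc x y, y ^ r =
      x ^ r + r * x ^ (r - 1) * (y - x) + r * (r - 1) / 2 * ξ ^ (r - 2) * (y - x) ^ 2 := by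
  rcases eq_or_ne x y with rfl | hxy
  · exact ⟨x, left_mem_uIcc, by ring⟩
  have hsmooth : ContDiffOn ℝ (1 + 1) (fun z : ℝ => z ^ r) (uIcc x y) :=
    contDiffOn_id.rpow_const_of_ne fun z hz => ((lt_min hx hy).trans_le hz.1).ne'
  obtain ⟨ξ, hξ, hrem⟩ := taylor_mean_remainder_lagrange_iteratedDeriv hxy hsmooth
  have hderiv : derivWithin (fun z : ℝ => z ^ r) (uIcc x y) x = r * x ^ (r - 1) :=
    (Real.hasDerivAt_rpow_const (Or.inl hx.ne')).hasDerivWithinAt.derivWithin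
      (uniqueDiffOn_uIcc hxy x left_mem_uIcc)
  have hpoly : taylorWithinEval (fun z : ℝ => z ^ r) 1 (uIcc x y) x y =
      x ^ r + r * x ^ (r - 1) * (y - x) := by
    rw [taylorWithinEval_succ _ 0, taylor_within_zero_eval, zero_add, iteratedDerivWithin_one,
      hderiv]
    simp [mul_comm]
  have hderiv₂ : iteratedDeriv 2 (fun z : ℝ => z ^ r) ξ = r * (r - 1) * ξ ^ (r - 2) := by
    rw [iteratedDeriv_eq_iterate, Real.iter_deriv_rpow_const, descPochhammer_eval_eq_prod_range]
    simp [Finset.prod_range_succ]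
  rw [hpoly, one_add_one_eq_two, hderiv₂, Nat.factorial_two, Nat.cast_ofNat] at hrem
  exact ⟨ξ, uIoo_subset_uIcc_self hξ, by linarith⟩

theorem add_rpow_le_one_add_rpow_mul_add {q a b δ : ℝ} (hq : 0 ≤ q) (ha : 0 ≤ a) (hb : 0 ≤ b)
    (hδ : 0 < δ) :
    (a + b) ^ q ≤ (1 + δ) ^ q * a ^ q + (1 + δ⁻¹) ^ q * b ^ q := by
  rw [← Real.mul_rpow (by positivity) ha, ← Real.mul_rpow (by positivity) hb]
  rcases le_total b (δ * a) with hba | hab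
  · calc (a + b) ^ q ≤ ((1 + δ) * a) ^ q := by gcongr; linarith
      _ ≤ _ := le_add_of_nonneg_right (by positivity)
  · have ha_le : a ≤ δ⁻¹ * b := (le_inv_mul_iff₀ hδ).2 hab
    calc (a + b) ^ q ≤ ((1 + δ⁻¹) * b) ^ q := by gcongr; linarith
      _ ≤ _ := le_add_of_nonneg_left (by positivity)

theorem exists_rpow_le_one_add_mul_rpow_add (q : ℝ) {η : ℝ} (hη : 0 < η) :
    ∃ C : ℝ, 0 < C ∧ ∀ a : ℝ, 0 < a → ∀ b : ℝ, 0 ≤ b → ∀ x ∈ Icc a (a + b),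
      x ^ q ≤ (1 + η) * a ^ q + C * b ^ q := by
  rcases le_or_gt q 0 with hq | hq
  · refine ⟨1, one_pos, fun a ha b hb x hx => ?_⟩
    calc x ^ q ≤ a ^ q := Real.rpow_le_rpow_of_nonpos ha hx.1 hq
      _ ≤ (1 + η) * a ^ q := le_mul_of_one_le_left (by positivity) (by linarith)
      _ ≤ _ := le_add_of_nonneg_right (by positivity)
  · obtain ⟨δ, hδ, hδη⟩ : ∃ δ : ℝ, 0 < δ ∧ (1 + δ) ^ q = 1 + η := by
      refine ⟨(1 + η) ^ q⁻¹ - 1,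
        sub_pos.2 (Real.one_lt_rpow (by linarith) (inv_pos.2 hq)), ?_⟩
      rw [add_sub_cancel, Real.rpow_inv_rpow (by positivity) hq.ne']
    refine ⟨(1 + δ⁻¹) ^ q, by positivity, fun a ha b hb x hx => ?_⟩
    rw [← hδη]
    exact (Real.rpow_le_rpow (ha.le.trans hx.1) hx.2 hq.le).trans
      (add_rpow_le_one_add_rpow_mul_add hq.le ha.le hb hδ)

theorem exists_rpow_add_one_taylor_remainder_eq {p a s : ℝ} (hp : p + 1 ≠ 0) (ha : 0 < a)
    (has : 0 < a + s) :
    ∃ ξ ∈ uIcc a (a + s),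
      (1 / (p + 1)) * (a + s) ^ (p + 1) - (1 / (p + 1)) * a ^ (p + 1) - s * a ^ p
        = p / 2 * ξ ^ (p - 1) * s ^ 2 := by
  obtain ⟨ξ, hξ, htaylor⟩ := exists_rpow_eq_taylor_two (p + 1) ha has
  rw [add_sub_cancel_left, add_sub_cancel_right, show p + 1 - 2 = p - 1 by ring] at htaylor
  refine ⟨ξ, hξ, ?_⟩
  rw [htaylor]
  field_simp
  ring

theorem H_remainder_bound_general (p : ℝ) (hp : 0 ≤ p) :
    ∀ ε : ℝ, 0 < ε → ∃ C : ℝ, 0 < C ∧ ∀ a : ℝ, 0 < a → ∀ s : ℝ, 0 ≤ s →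
      (1 / (p + 1)) * (a + s) ^ (p + 1) - (1 / (p + 1)) * a ^ (p + 1) - s * a ^ p
          - (p / 2) * a ^ (p - 1) * s ^ 2
        ≤ ε * a ^ (p - 1) * s ^ 2 + C * s ^ (p + 1) := by
  intro ε hε
  -- Using `(p + 1) / 2` in place of `p / 2` keeps both constants positive when `p = 0`.
  obtain ⟨C, hC, hbound⟩ :=
    exists_rpow_le_one_add_mul_rpow_add (p - 1) (η := ε / ((p + 1) / 2)) (by positivity)
  refine ⟨(p + 1) / 2 * C, by positivity, fun a ha s hs => ?_⟩
  obtain ⟨ξ, hξ, hH⟩ :=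
    exists_rpow_add_one_taylor_remainder_eq (p := p) (s := s) (by positivity) ha (by positivity)
  rw [uIcc_of_le (le_add_of_nonneg_right hs)] at hξ
  have hpow : s ^ (p + 1) = s ^ (p - 1) * s ^ 2 := by
    rw [← Real.rpow_add_natCast' hs (by push_cast; linarith)]
    congr 1
    push_cast
    ring
  set E := ε / ((p + 1) / 2) * a ^ (p - 1) + C * s ^ (p - 1) with hE
  have : 0 ≤ E := by positivity
  calc _ = p / 2 * (ξ ^ (p - 1) - a ^ (p - 1)) * s ^ 2 := by rw [hH]; ring
    _ ≤ p / 2 * E * s ^ 2 := by gcongr; linarith [hbound a ha s hs ξ hξ]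
    _ ≤ (p + 1) / 2 * E * s ^ 2 := by gcongr; linarith
    _ = _ := by rw [hE, hpow]; field_simp

/-- Lemma 3.5(ii): with `p > 1` and
`H(a,s) = (1/(p+1))(a+s)^{p+1} − (1/(p+1)) a^{p+1} − s a^p`, for every `ε > 0` there is
`C_ε > 0` such that `H(a,s) − (p/2) a^{p−1} s² ≤ ε a^{p−1} s² + C_ε s^{p+1}` for all
`a > 0`, `s ≥ 0`. -/
theorem H_remainder_bound (p : ℝ) (hp : 1 < p) :
    ∀ ε : ℝ, 0 < ε → ∃ C : ℝ, 0 < C ∧ ∀ a : ℝ, 0 < a → ∀ s : ℝ, 0 ≤ s →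
      (1 / (p + 1)) * (a + s) ^ (p + 1) - (1 / (p + 1)) * a ^ (p + 1) - s * a ^ p
          - (p / 2) * a ^ (p - 1) * s ^ 2
        ≤ ε * a ^ (p - 1) * s ^ 2 + C * s ^ (p + 1) :=
  H_remainder_bound_general p (by linarith)
end

section
/- (Mountain Pass Theorem.) Let E be a real Banach space and let F : E → ℝ be Fréchet differentiable with continuous derivative DF : E → E* (i.e. F ∈ C¹(E, ℝ)), with F(0) = 0. Assume F satisfies the Palais–Smale condition: every sequence (u_n) in E such that the sequence (F(u_n)) is bounded and ‖DF(u_n)‖_{E*} → 0 has a convergent subsequence. Assume further that (a) there exist ρ > 0 and α > 0 such that F(u) ≥ α for all u ∈ E with ‖u‖ = ρ, and (b) there exists e ∈ E with ‖e‖ > ρ and F(e) ≤ 0. Define c = inf over all continuous paths g : [0,1] → E with g(0) = 0 and g(1) = e, of sup_{θ ∈ [0,1]} F(g(θ)). Then c ≥ α > 0 and c is a critical value of F: there exists u ∈ E with F(u) = c and DF(u) = 0. -/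
open Filter Set

/-!
The mountain pass theorem is the case of paths with prescribed endpoints of a minimax principle for
the maps `g : K → E` from a compact space that are prescribed on a closed subset. The maximum of `F`
along `g` is a lower semicontinuous function of `g`, so Ekeland's principle provides, near its
infimum `c`, a map `g` for which this maximum decreases with slope at most `ε`. Such a `g` has a
maximum point with `‖DF‖ ≤ ε`: otherwise a partition of unity glues directions of descent into a
field along `g` that vanishes on the prescribed part, and a small step along this field lowers the
maximum too fast. The Palais–Smale condition lets `ε` tend to `0`.
-/

open scoped Topology unitInterval

section Ekeland

variable {X : Type*} [PseudoMetricSpace X] {f : X → ℝ} {ε : ℝ}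

/-- The points below `x` in Ekeland's ordering: those to which `f` descends from `x` with slope at
least `ε`. The variational principle is the existence of minimal points of this ordering. -/
def ekelandCone (f : X → ℝ) (ε : ℝ) (x : X) : Set X :=
  {y | f y + ε * dist x y ≤ f x}

theorem self_mem_ekelandCone (x : X) : x ∈ ekelandCone f ε x := by
  simp [ekelandCone]

theorem ekelandCone_subset_of_mem (hε : 0 ≤ ε) {x y : X} (hy : y ∈ ekelandCone f ε x) :
    ekelandCone f ε y ⊆ ekelandCone f ε x := by
  intro z hz
  simp only [ekelandCone, mem_ofPred_eq] at hy hz ⊢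
  linarith [mul_le_mul_of_nonneg_left (dist_triangle x y z) hε]

theorem isClosed_ekelandCone (hf : LowerSemicontinuous f) (x : X) :
    IsClosed (ekelandCone f ε x) := by
  have hcont : Continuous fun y => ε * dist x y := by fun_prop
  exact (hf.add hcont.lowerSemicontinuous).isClosed_preimage (f x)

theorem exists_mem_ekelandCone_forall_le_add (hbdd : BddBelow (range f)) {δ : ℝ} (hδ : 0 < δ)
    (x : X) : ∃ y ∈ ekelandCone f ε x, ∀ z ∈ ekelandCone f ε x, f y ≤ f z + δ := by
  have hne : (f '' ekelandCone f ε x).Nonempty := ⟨f x, x, self_mem_ekelandCone x, rfl⟩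
  obtain ⟨_, ⟨y, hy, rfl⟩, hlt⟩ := exists_lt_of_csInf_lt hne (lt_add_of_pos_right _ hδ)
  refine ⟨y, hy, fun z hz => hlt.le.trans ?_⟩
  gcongr
  exact csInf_le (hbdd.mono (image_subset_range f _)) ⟨z, hz, rfl⟩

theorem exists_seq_ekelandCone (hε : 0 < ε) (hbdd : BddBelow (range f)) (x₀ : X) :
    ∃ u : ℕ → X, u 0 = x₀ ∧ Antitone (fun n => ekelandCone f ε (u n)) ∧
      ∀ n, ∀ z ∈ ekelandCone f ε (u (n + 1)), ε * dist (u (n + 1)) z ≤ 1 / ((n : ℝ) + 1) := by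
  choose next hnext hmin using fun (n : ℕ) (x : X) =>
    exists_mem_ekelandCone_forall_le_add (f := f) (ε := ε) hbdd
      (Nat.one_div_pos_of_nat (α := ℝ) (n := n)) x
  let u : ℕ → X := fun n => Nat.rec x₀ next n
  have hstep : ∀ n, ekelandCone f ε (u (n + 1)) ⊆ ekelandCone f ε (u n) := fun n =>
    ekelandCone_subset_of_mem hε.le (hnext n (u n))
  refine ⟨u, rfl, antitone_nat_of_succ_le hstep, fun n z hz => ?_⟩
  have hdescent : f z + ε * dist (u (n + 1)) z ≤ f (u (n + 1)) := hz
  have halmost : f (u (n + 1)) ≤ f z + 1 / ((n : ℝ) + 1) := hmin n (u n) z (hstep n hz)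
  linarith

theorem ekeland_variational_principle {X : Type*} [MetricSpace X] [CompleteSpace X] {f : X → ℝ}
    (hf : LowerSemicontinuous f) (hbdd : BddBelow (range f)) {ε : ℝ} (hε : 0 < ε) (x₀ : X) :
    ∃ x, f x + ε * dist x₀ x ≤ f x₀ ∧ ∀ y, y ≠ x → f x < f y + ε * dist x y := by
  obtain ⟨u, rfl, hanti, hsmall⟩ := exists_seq_ekelandCone hε hbdd x₀
  have hdist : ∀ n, ∀ z ∈ ekelandCone f ε (u (n + 1)),
      dist (u (n + 1)) z ≤ 1 / ((n : ℝ) + 1) / ε := fun n z hz =>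
    (le_div_iff₀' hε).2 (hsmall n z hz)
  have hzero : Tendsto (fun n : ℕ => 1 / ((n : ℝ) + 1) / ε) atTop (𝓝 0) := by
    simpa using tendsto_one_div_add_atTop_nhds_zero_nat.div_const ε
  have hmem : ∀ n m, n ≤ m → u m ∈ ekelandCone f ε (u n) := fun n m hnm =>
    hanti hnm (self_mem_ekelandCone (u m))
  have hcauchy : CauchySeq fun n => u (n + 1) :=
    cauchySeq_of_le_tendsto_0' _ (fun n m hnm => hdist n _ (hmem _ _ (by gcongr))) hzero
  obtain ⟨x, hx⟩ := cauchySeq_tendsto_of_complete hcauchy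
  have hxmem : ∀ n, x ∈ ekelandCone f ε (u n) := fun n =>
    (isClosed_ekelandCone hf (u n)).mem_of_tendsto hx <|
      (eventually_ge_atTop n).mono fun m hnm => hmem n (m + 1) (hnm.trans m.le_succ)
  refine ⟨x, hxmem 0, fun y hyx => ?_⟩
  by_contra! hle
  have hymem : ∀ n, y ∈ ekelandCone f ε (u n) := fun n =>
    ekelandCone_subset_of_mem hε.le (hxmem n) hle
  have hy : Tendsto (fun n => u (n + 1)) atTop (𝓝 y) :=
    tendsto_iff_dist_tendsto_zero.2 <|
      squeeze_zero (fun _ => dist_nonneg) (fun n => hdist n y (hymem (n + 1))) hzero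
  exact hyx (tendsto_nhds_unique hy hx)

end Ekeland

section MaxAlong

variable {K E : Type*} [TopologicalSpace K] [TopologicalSpace E] {F : E → ℝ}

/-- The maximum of a functional `F` along a map `g`. It is attained when `K` is compact and
nonempty and `F` is continuous; otherwise the supremum may be a junk value. -/
noncomputable def maxAlong (F : E → ℝ) (g : C(K, E)) : ℝ :=
  ⨆ t, F (g t)

/-- The maps that agree with `γ` on `K₀`: the class of competitors of a minimax problem, such as
the paths with the same endpoints as `γ`. -/
def mapsRel (γ : C(K, E)) (K₀ : Set K) : Set C(K, E) :=
  {g | EqOn g γ K₀}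

theorem isClosed_mapsRel [T2Space E] (γ : C(K, E)) (K₀ : Set K) : IsClosed (mapsRel γ K₀) := by
  simp only [mapsRel, EqOn, ofPred_forall]
  exact isClosed_biInter fun t _ =>
    isClosed_eq (continuous_eval_const t) continuous_const

theorem mem_mapsRel_path {a b : E} {γ : Path a b} {g : C(I, E)} :
    g ∈ mapsRel (γ : C(I, E)) {0, 1} ↔ g 0 = a ∧ g 1 = b := by
  simp [mapsRel, EqOn]

theorem setOf_sSup_path_eq_image_maxAlong (F : E → ℝ) {a b : E} (γ : Path a b) :
    {t : ℝ | ∃ g : ℝ → E, ContinuousOn g (Icc 0 1) ∧ g 0 = a ∧ g 1 = b ∧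
      t = sSup ((fun θ => F (g θ)) '' Icc 0 1)} = maxAlong F '' mapsRel (γ : C(I, E)) {0, 1} := by
  ext t
  constructor
  · rintro ⟨g, hg, h0, h1, rfl⟩
    refine ⟨⟨(Icc 0 1).domRestrict g, hg.domRestrict⟩, mem_mapsRel_path.2 ⟨h0, h1⟩, ?_⟩
    rw [sSup_image']
    rfl
  · rintro ⟨g, hg, rfl⟩
    obtain ⟨h0, h1⟩ := mem_mapsRel_path.1 hg
    refine ⟨IccExtend zero_le_one g, g.continuous.Icc_extend'.continuousOn, ?_, ?_, ?_⟩
    · simpa using h0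
    · simpa using h1
    · rw [sSup_image']
      simp [maxAlong]

variable [CompactSpace K]

theorem bddAbove_range_comp (hF : Continuous F) (g : C(K, E)) :
    BddAbove (range fun t => F (g t)) :=
  (isCompact_range (hF.comp g.continuous)).bddAbove

theorem le_maxAlong (hF : Continuous F) (g : C(K, E)) (t : K) : F (g t) ≤ maxAlong F g :=
  le_ciSup (bddAbove_range_comp hF g) t

theorem exists_eq_maxAlong [Nonempty K] (hF : Continuous F) (g : C(K, E)) :
    ∃ t, F (g t) = maxAlong F g :=
  (isCompact_range (hF.comp g.continuous)).sSup_mem (range_nonempty _)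

theorem lowerSemicontinuous_maxAlong (hF : Continuous F) :
    LowerSemicontinuous (maxAlong F : C(K, E) → ℝ) :=
  lowerSemicontinuous_ciSup (bddAbove_range_comp hF) fun t =>
    (hF.comp (continuous_eval_const t)).lowerSemicontinuous

end MaxAlong

theorem le_maxAlong_of_forall_norm_eq {K E : Type*} [TopologicalSpace K] [CompactSpace K]
    [PreconnectedSpace K] [SeminormedAddCommGroup E] {F : E → ℝ} (hF : Continuous F) {ρ α : ℝ}
    (hsphere : ∀ u, ‖u‖ = ρ → α ≤ F u) (g : C(K, E)) {s t : K} (hs : ‖g s‖ ≤ ρ)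
    (ht : ρ ≤ ‖g t‖) : α ≤ maxAlong F g := by
  obtain ⟨r, hr⟩ := mem_range_of_exists_le_of_exists_ge g.continuous.norm ⟨s, hs⟩ ⟨t, ht⟩
  exact (hsphere _ hr).trans (le_maxAlong hF g r)

section Descent

variable {E : Type*} [NormedAddCommGroup E] [NormedSpace ℝ E] {F : E → ℝ}

theorem exists_norm_lt_one_apply_lt_neg (L : E →L[ℝ] ℝ) {r : ℝ} (hL : r < ‖L‖) :
    ∃ v : E, ‖v‖ < 1 ∧ L v < -r := by
  obtain ⟨v, hv, hlt⟩ := L.exists_lt_apply_of_lt_opNorm hL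
  rcases lt_abs.1 hlt with h | h
  · exact ⟨-v, by simpa using hv, by simpa using h⟩
  · exact ⟨v, hv, lt_neg_of_lt_neg h⟩

theorem eventually_apply_add_smul_lt {L : E →L[ℝ] ℝ} {x v : E} (hF : HasStrictFDerivAt F L x)
    {m : ℝ} (hm : L v < m) :
    ∀ᶠ z : E × ℝ × E in 𝓝 (x, 0, v),
      0 < z.2.1 → F (z.1 + z.2.1 • z.2.2) < F z.1 + z.2.1 * m := by
  have hpair : Tendsto (fun z : E × ℝ × E => (z.1 + z.2.1 • z.2.2, z.1)) (𝓝 (x, 0, v))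
      (𝓝 (x, x)) :=
    Continuous.tendsto' (by fun_prop) _ _ (by simp)
  have hstep : (fun z : E × ℝ × E => z.2.1 • z.2.2) =O[𝓝 (x, 0, v)] fun z => z.2.1 := by
    have hv : Tendsto (fun z : E × ℝ × E => z.2.2) (𝓝 (x, 0, v)) (𝓝 v) :=
      Continuous.tendsto' (by fun_prop) _ _ rfl
    simpa using (Asymptotics.isBigO_refl (fun z : E × ℝ × E => z.2.1) _).smul (hv.isBigO_one ℝ)
  have hremainder := (hF.isLittleO.comp_tendsto hpair).trans_isBigO
    (by simpa [Function.comp_def] using hstep)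
  obtain ⟨m', hLm', hm'⟩ := exists_between hm
  have hslope : ∀ᶠ z : E × ℝ × E in 𝓝 (x, 0, v), L z.2.2 < m' :=
    (by fun_prop : Continuous fun z : E × ℝ × E => L z.2.2).continuousAt.eventually_lt
      continuousAt_const hLm'
  filter_upwards [hremainder.def (sub_pos.2 hm'), hslope] with ⟨y, s, w⟩ hz hw hs
  simp only [Function.comp_apply, add_sub_cancel_left, map_smul, smul_eq_mul, Real.norm_eq_abs,
    abs_of_pos hs] at hz hw hs ⊢
  linarith [le_abs_self (F (y + s • w) - F y - s * L w), mul_lt_mul_of_pos_left hw hs]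

variable {K : Type*} [TopologicalSpace K] [CompactSpace K]

theorem exists_descent_field [T2Space K] (hF : ContDiff ℝ 1 F) (g : C(K, E)) {K₀ : Set K}
    (hK₀ : IsClosed K₀) {r : ℝ} (hlt : ∀ t ∈ K₀, F (g t) < maxAlong F g)
    (hlarge : ∀ t, F (g t) = maxAlong F g → r < ‖fderiv ℝ F (g t)‖) :
    ∃ w : C(K, E), (∀ t, ‖w t‖ ≤ 1) ∧ (∀ t ∈ K₀, w t = 0) ∧
      ∀ t, F (g t) = maxAlong F g → fderiv ℝ F (g t) (w t) < -r := by
  let D : K → Set E := fun t => {v | ‖v‖ ≤ 1 ∧ (t ∈ K₀ → v = 0) ∧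
    (F (g t) = maxAlong F g → fderiv ℝ F (g t) v < -r)}
  have hconvex : ∀ t, Convex ℝ (D t) := by
    rintro t v ⟨hv, hv₀, hvr⟩ w ⟨hw, hw₀, hwr⟩ a b ha hb hab
    refine ⟨?_, fun h => by simp [hv₀ h, hw₀ h], fun h => ?_⟩
    · simpa using convex_closedBall (0 : E) 1 (by simpa using hv) (by simpa using hw) ha hb hab
    · exact convex_halfSpace_lt (fderiv ℝ F (g t)).isLinear (-r) (hvr h) (hwr h) ha hb hab
  have hlocal : ∀ t, ∃ v, ∀ᶠ s in 𝓝 t, v ∈ D s := by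
    intro t
    by_cases ht : F (g t) = maxAlong F g
    · obtain ⟨v, hv, hvr⟩ := exists_norm_lt_one_apply_lt_neg (fderiv ℝ F (g t)) (hlarge t ht)
      have hcont : Continuous fun s => fderiv ℝ F (g s) v :=
        ((hF.continuous_fderiv one_ne_zero).comp g.continuous).clm_apply continuous_const
      have htK₀ : t ∉ K₀ := fun h => (hlt t h).ne ht
      refine ⟨v, ?_⟩
      filter_upwards [hcont.continuousAt.eventually_lt continuousAt_const hvr,
        hK₀.isOpen_compl.mem_nhds htK₀] with s hs hsK₀
      exact ⟨hv.le, fun h => absurd h hsK₀, fun _ => hs⟩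
    · refine ⟨0, ?_⟩
      filter_upwards [(hF.continuous.comp g.continuous).continuousAt.eventually_ne ht] with s hs
      exact ⟨by simp, fun _ => rfl, fun h => absurd h hs⟩
  obtain ⟨w, hw⟩ := exists_continuous_forall_mem_convex_of_local_const hconvex hlocal
  exact ⟨w, fun t => (hw t).1, fun t => (hw t).2.1, fun t => (hw t).2.2⟩

theorem eventually_maxAlong_add_smul_lt [Nonempty K] (hF : ContDiff ℝ 1 F) (g w : C(K, E))
    {r : ℝ} (hdesc : ∀ t, F (g t) = maxAlong F g → fderiv ℝ F (g t) (w t) < -r) :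
    ∀ᶠ s : ℝ in 𝓝[>] 0, maxAlong F (g + s • w) < maxAlong F g - r * s := by
  have hFc : Continuous F := hF.continuous
  have hlocal : ∀ t ∈ (univ : Set K), ∀ᶠ z : ℝ × K in 𝓝 ((0 : ℝ), t),
      0 < z.1 → F (g z.2 + z.1 • w z.2) < maxAlong F g - r * z.1 := by
    intro t _
    rcases (le_maxAlong hFc g t).eq_or_lt with ht | ht
    · have hstrict : HasStrictFDerivAt F (fderiv ℝ F (g t)) (g t) :=
        hF.contDiffAt.hasStrictFDerivAt one_ne_zero
      have hparam : Tendsto (fun z : ℝ × K => (g z.2, z.1, w z.2)) (𝓝 (0, t))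
          (𝓝 (g t, 0, w t)) :=
        Continuous.tendsto' (by fun_prop) _ _ rfl
      filter_upwards [hparam.eventually (eventually_apply_add_smul_lt hstrict (hdesc t ht))]
        with z hz hpos
      linarith [hz hpos, le_maxAlong hFc g z.2]
    · have hl : Continuous fun z : ℝ × K => F (g z.2 + z.1 • w z.2) := by fun_prop
      have hr : Continuous fun z : ℝ × K => maxAlong F g - r * z.1 := by fun_prop
      filter_upwards [hl.continuousAt.eventually_lt (x₀ := ((0 : ℝ), t)) hr.continuousAt
        (by simpa using ht)] with z hz _
      exact hz
  have hall := isCompact_univ.eventually_forall_of_forall_eventually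
    (P := fun s t => 0 < s → F (g t + s • w t) < maxAlong F g - r * s) hlocal
  filter_upwards [nhdsWithin_le_nhds hall, self_mem_nhdsWithin] with s hs hpos
  obtain ⟨t, ht⟩ := exists_eq_maxAlong hFc (g + s • w)
  exact ht ▸ hs t (mem_univ t) hpos

theorem exists_norm_fderiv_le_of_forall_maxAlong_lt [Nonempty K] [T2Space K]
    (hF : ContDiff ℝ 1 F) {g : C(K, E)} {K₀ : Set K} (hK₀ : IsClosed K₀) {ε : ℝ} (hε : 0 ≤ ε)
    (hlt : ∀ t ∈ K₀, F (g t) < maxAlong F g)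
    (hmin : ∀ h ∈ mapsRel g K₀, h ≠ g → maxAlong F g < maxAlong F h + ε * dist g h) :
    ∃ u, F u = maxAlong F g ∧ ‖fderiv ℝ F u‖ ≤ ε := by
  by_contra! hlarge
  obtain ⟨w, hw, hw₀, hdesc⟩ := exists_descent_field hF g hK₀ hlt fun t => hlarge (g t)
  obtain ⟨s, hs, hpos⟩ :=
    ((eventually_maxAlong_add_smul_lt hF g w hdesc).and self_mem_nhdsWithin).exists
  have hmem : g + s • w ∈ mapsRel g K₀ := fun t ht => by simp [hw₀ t ht]
  have hne : g + s • w ≠ g :=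
    ne_of_apply_ne (maxAlong F) (hs.trans_le (sub_le_self _ (by positivity))).ne
  have hdist : dist g (g + s • w) ≤ s := by
    rw [ContinuousMap.dist_le hpos.le]
    intro t
    simpa [norm_smul, abs_of_pos hpos] using mul_le_of_le_one_right hpos.le (hw t)
  linarith [hmin _ hmem hne, mul_le_mul_of_nonneg_left hdist hε]

end Descent

section Minimax

variable {E : Type*} [NormedAddCommGroup E] [NormedSpace ℝ E] {F : E → ℝ} {c : ℝ}

/-- The Palais–Smale condition at the level `c`: a sequence along which `F` tends to `c` and its
derivative tends to `0` has a convergent subsequence. -/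
def PalaisSmaleAt (F : E → ℝ) (c : ℝ) : Prop :=
  ∀ u : ℕ → E, Tendsto (fun n => F (u n)) atTop (𝓝 c) →
    Tendsto (fun n => fderiv ℝ F (u n)) atTop (𝓝 0) →
    ∃ φ : ℕ → ℕ, StrictMono φ ∧ ∃ x : E, Tendsto (u ∘ φ) atTop (𝓝 x)

theorem palaisSmaleAt_of_forall_bounded
    (hPS : ∀ u : ℕ → E, (∃ M : ℝ, ∀ n, |F (u n)| ≤ M) →
      Tendsto (fun n => ‖fderiv ℝ F (u n)‖) atTop (𝓝 0) →
      ∃ φ : ℕ → ℕ, StrictMono φ ∧ ∃ x : E, Tendsto (u ∘ φ) atTop (𝓝 x)) (c : ℝ) :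
    PalaisSmaleAt F c := by
  intro u hFu hDFu
  obtain ⟨M, hM⟩ := hFu.abs.bddAbove_range
  exact hPS u ⟨M, forall_mem_range.1 hM⟩ (tendsto_zero_iff_norm_tendsto_zero.1 hDFu)

theorem PalaisSmaleAt.exists_fderiv_eq_zero (hPS : PalaisSmaleAt F c) (hF : ContDiff ℝ 1 F)
    (hc : (c, 0) ∈ closure (range fun u => (F u, fderiv ℝ F u))) :
    ∃ u, F u = c ∧ fderiv ℝ F u = 0 := by
  obtain ⟨p, hp, hlim⟩ := mem_closure_iff_seq_limit.1 hc
  choose u hu using hp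
  obtain rfl : (fun n => (F (u n), fderiv ℝ F (u n))) = p := funext hu
  obtain ⟨φ, hφ, x, hx⟩ := hPS u hlim.fst_nhds hlim.snd_nhds
  have hcont : Continuous fun u => (F u, fderiv ℝ F u) :=
    hF.continuous.prodMk (hF.continuous_fderiv one_ne_zero)
  exact ⟨x, Prod.ext_iff.1 <|
    tendsto_nhds_unique ((hcont.tendsto x).comp hx) (hlim.comp hφ.tendsto_atTop)⟩

variable {K : Type*} [TopologicalSpace K] [CompactSpace K] [T2Space K] [Nonempty K]
  {K₀ : Set K} {γ : C(K, E)} [CompleteSpace E]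

theorem exists_almost_critical_of_isGLB (hF : ContDiff ℝ 1 F) (hK₀ : IsClosed K₀)
    (hc : IsGLB (maxAlong F '' mapsRel γ K₀) c) (hγ : ∀ t ∈ K₀, F (γ t) < c) {ε : ℝ}
    (hε : 0 < ε) : ∃ u, c ≤ F u ∧ F u < c + ε ∧ ‖fderiv ℝ F u‖ ≤ ε := by
  have : CompleteSpace (mapsRel γ K₀) := (isClosed_mapsRel γ K₀).completeSpace_coe
  have hlsc : LowerSemicontinuous fun g : mapsRel γ K₀ => maxAlong F g.1 :=
    (lowerSemicontinuous_maxAlong hF.continuous).comp continuous_subtype_val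
  have hbdd : BddBelow (range fun g : mapsRel γ K₀ => maxAlong F g.1) := by
    rw [← image_eq_range]
    exact hc.bddBelow
  obtain ⟨_, ⟨g₀, hg₀, rfl⟩, -, hg₀c⟩ := hc.exists_between (lt_add_of_pos_right c hε)
  obtain ⟨⟨g, hg⟩, hle, hmin⟩ := ekeland_variational_principle hlsc hbdd hε ⟨g₀, hg₀⟩
  have hcg : c ≤ maxAlong F g := hc.1 (mem_image_of_mem _ hg)
  obtain ⟨u, hu, hDu⟩ := exists_norm_fderiv_le_of_forall_maxAlong_lt hF hK₀ hε.le
    (fun t ht => by rw [hg ht]; exact (hγ t ht).trans_le hcg)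
    (fun h hh hne => hmin ⟨h, hh.trans hg⟩ fun heq => hne (congrArg Subtype.val heq))
  refine ⟨u, hu ▸ hcg, ?_, hDu⟩
  have hdescent : maxAlong F g ≤ maxAlong F g₀ :=
    (le_add_of_nonneg_right (by positivity)).trans hle
  exact hu ▸ hdescent.trans_lt hg₀c

theorem PalaisSmaleAt.exists_fderiv_eq_zero_of_isGLB (hPS : PalaisSmaleAt F c)
    (hF : ContDiff ℝ 1 F) (hK₀ : IsClosed K₀) (hc : IsGLB (maxAlong F '' mapsRel γ K₀) c)
    (hγ : ∀ t ∈ K₀, F (γ t) < c) : ∃ u, F u = c ∧ fderiv ℝ F u = 0 := by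
  refine hPS.exists_fderiv_eq_zero hF (Metric.mem_closure_range_iff.2 fun ε hε => ?_)
  obtain ⟨u, hcu, huc, hDu⟩ := exists_almost_critical_of_isGLB hF hK₀ hc hγ (half_pos hε)
  refine ⟨u, ?_⟩
  rw [dist_comm, Prod.dist_eq, max_lt_iff, Real.dist_eq, dist_zero_right, abs_lt]
  exact ⟨⟨by linarith, by linarith⟩, by linarith⟩

/-- Besides the mountain pass theorem, the saddle point and linking theorems are instances of this
minimax principle. -/
theorem mountain_pass_general (hF : ContDiff ℝ 1 F) (hK₀ : IsClosed K₀) {α : ℝ}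
    (hγ : ∀ t ∈ K₀, F (γ t) < α) (hα : ∀ g ∈ mapsRel γ K₀, α ≤ maxAlong F g)
    (hPS : PalaisSmaleAt F (sInf (maxAlong F '' mapsRel γ K₀))) :
    α ≤ sInf (maxAlong F '' mapsRel γ K₀) ∧
      ∃ u, F u = sInf (maxAlong F '' mapsRel γ K₀) ∧ fderiv ℝ F u = 0 := by
  have hne : (maxAlong F '' mapsRel γ K₀).Nonempty := ⟨_, γ, eqOn_refl γ K₀, rfl⟩
  have hαc := le_csInf hne (forall_mem_image.2 hα)
  exact ⟨hαc, hPS.exists_fderiv_eq_zero_of_isGLB hF hK₀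
    (isGLB_csInf hne ⟨α, forall_mem_image.2 hα⟩) fun t ht => (hγ t ht).trans_le hαc⟩

end Minimax

/-- Mountain Pass Theorem, Ambrosetti–Rabinowitz. Let `E` be a real Banach
space and `F : E → ℝ` a `C¹` functional (Fréchet differentiable with continuous
derivative), `F(0) = 0`, satisfying the Palais–Smale condition. If `F ≥ α > 0` on the
sphere of radius `ρ > 0` and there is `e` with `‖e‖ > ρ` and `F(e) ≤ 0`, then the
min-max value `c = inf_{paths g from 0 to e} sup_{θ ∈ [0,1]} F(g(θ))` satisfies
`c ≥ α > 0` and is a critical value of `F`. -/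
theorem mountain_pass {E : Type*} [NormedAddCommGroup E] [NormedSpace ℝ E]
    [CompleteSpace E] (F : E → ℝ)
    (hdiff : Differentiable ℝ F)
    (hderiv_cont : Continuous fun u => fderiv ℝ F u)
    (hF0 : F 0 = 0)
    (hPS : ∀ u : ℕ → E,
      (∃ M : ℝ, ∀ n, |F (u n)| ≤ M) →
      Tendsto (fun n => ‖fderiv ℝ F (u n)‖) atTop (nhds 0) →
      ∃ φ : ℕ → ℕ, StrictMono φ ∧ ∃ x : E, Tendsto (u ∘ φ) atTop (nhds x))
    (ρ α : ℝ) (hρ : 0 < ρ) (hα : 0 < α)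
    (hsphere : ∀ u : E, ‖u‖ = ρ → α ≤ F u)
    (e : E) (he : ρ < ‖e‖) (hFe : F e ≤ 0) :
    ∀ c : ℝ,
      c = sInf {t : ℝ | ∃ g : ℝ → E, ContinuousOn g (Icc 0 1) ∧ g 0 = 0 ∧ g 1 = e ∧
            t = sSup ((fun θ => F (g θ)) '' Icc 0 1)} →
      α ≤ c ∧ 0 < c ∧ ∃ u : E, F u = c ∧ fderiv ℝ F u = 0 := by
  rintro c rfl
  have hF : ContDiff ℝ 1 F := contDiff_one_iff_fderiv.2 ⟨hdiff, hderiv_cont⟩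
  rw [setOf_sSup_path_eq_image_maxAlong F (Path.segment 0 e)]
  have hγ : ∀ t ∈ ({0, 1} : Set I), F (Path.segment 0 e t) < α := by
    rintro _ (rfl | rfl)
    exacts [by simpa [hF0] using hα, by simpa using hFe.trans_lt hα]
  have hpath : ∀ g ∈ mapsRel (Path.segment 0 e : C(I, E)) {0, 1}, α ≤ maxAlong F g := by
    intro g hg
    obtain ⟨hg0, hg1⟩ := mem_mapsRel_path.1 hg
    exact le_maxAlong_of_forall_norm_eq hF.continuous hsphere g (s := 0) (t := 1)
      (by simpa [hg0] using hρ.le) (by simpa [hg1] using he.le)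
  obtain ⟨hαc, hcrit⟩ := mountain_pass_general hF (toFinite {0, 1}).isClosed hγ hpath
    (palaisSmaleAt_of_forall_bounded hPS _)
  exact ⟨hαc, hα.trans_le hαc, hcrit⟩
end
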